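/- arXiv:2205.15216 — 2 statements merged into one kernel-verified Lean document; each statement's English description precedes it below -/
import Mathlib

section
/- For any 1/2 < t < 1 and any real x ≥ e^{16/(1-t)²}, one has (7/20)·x^{1-t}/((1-t)(log x)^t) < ∑_{n ≤ x} p_n^{-t} < (10/3)·x^{1-t}/((1-t)(log x)^t), where the sum ranges over all positive integers n with n ≤ x. -/
/-- The `n`-th prime number, 1-indexed: `nthPrime 1 = 2`, `nthPrime 2 = 3`, ... -/
noncomputable def nthPrime (n : ℕ) : ℕ := Nat.nth Nat.Prime (n - 1)

/-!
Chebyshev's estimates put `p_n` between constant multiples of `n log x`: the bound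
`p_n ≤ (14/5) n log x` holds for all `n ≤ x`, and `p_n ≥ (5/16) n log x` for `√x < n`. Since the
exponent `t` is at most `1`, raising these to the power `-t` costs at most the factors `5/14` and
`16/5`, so the sum is compared with `(log x)^(-t) ∑ n^(-t) ≈ x^(1-t) / ((1-t) (log x)^t)`. The terms
with `n ≤ √x` contribute at most `√x^(1-t) / (1-t)`, and the hypothesis on `x` makes `√x^(1-t)`
larger than a multiple of `log x`, which is what the gap between the constants absorbs.
-/

section

open Real Finset

theorem rpow_le_tangent_line {a b p : ℝ} (ha : 0 < a) (hb : 0 ≤ b) (hp₀ : 0 ≤ p) (hp₁ : p ≤ 1) :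
    b ^ p ≤ a ^ p + p * a ^ (p - 1) * (b - a) := by
  have bernoulli : (1 + (b / a - 1)) ^ p ≤ 1 + p * (b / a - 1) :=
    rpow_one_add_le_one_add_mul_self (by linarith [div_nonneg hb ha.le]) hp₀ hp₁
  rw [add_sub_cancel, div_rpow hb ha.le, div_le_iff₀ (by positivity)] at bernoulli
  calc b ^ p ≤ (1 + p * (b / a - 1)) * a ^ p := bernoulli
    _ = a ^ p + p * a ^ (p - 1) * (b - a) := by
      rw [rpow_sub_one ha.ne']
      field_simp

theorem sum_Icc_rpow_neg_le {t : ℝ} (ht₀ : 0 ≤ t) (ht₁ : t < 1) (N : ℕ) :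
    ∑ n ∈ Icc 1 N, (n : ℝ) ^ (-t) ≤ (N : ℝ) ^ (1 - t) / (1 - t) := by
  have h1t : 0 < 1 - t := sub_pos.2 ht₁
  induction N with
  | zero => simp [zero_rpow h1t.ne']
  | succ k ih =>
    have tangent := rpow_le_tangent_line (a := k + 1) (b := k) (p := 1 - t)
      (by positivity) (by positivity) h1t.le (by linarith)
    rw [sub_sub_cancel_left] at tangent
    rw [sum_Icc_succ_top (by omega), le_div_iff₀ h1t]
    rw [le_div_iff₀ h1t] at ih
    push_cast
    linarith

theorem le_sum_Icc_rpow_neg {t : ℝ} (ht₀ : 0 ≤ t) (ht₁ : t < 1) (N : ℕ) :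
    (((N : ℝ) + 1) ^ (1 - t) - 1) / (1 - t) ≤ ∑ n ∈ Icc 1 N, (n : ℝ) ^ (-t) := by
  have h1t : 0 < 1 - t := sub_pos.2 ht₁
  induction N with
  | zero => simp
  | succ k ih =>
    have tangent := rpow_le_tangent_line (a := k + 1) (b := k + 1 + 1) (p := 1 - t)
      (by positivity) (by positivity) h1t.le (by linarith)
    rw [sub_sub_cancel_left] at tangent
    rw [sum_Icc_succ_top (by omega), div_le_iff₀ h1t]
    rw [div_le_iff₀ h1t] at ih
    push_cast
    linarith

theorem sum_Icc_floor_rpow_neg_le {t x : ℝ} (ht₀ : 0 ≤ t) (ht₁ : t < 1) (hx : 0 ≤ x) :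
    ∑ n ∈ Icc 1 ⌊x⌋₊, (n : ℝ) ^ (-t) ≤ x ^ (1 - t) / (1 - t) := by
  have : 0 < 1 - t := sub_pos.2 ht₁
  refine (sum_Icc_rpow_neg_le ht₀ ht₁ _).trans ?_
  gcongr
  exact Nat.floor_le hx

theorem le_sum_Icc_floor_rpow_neg {t x : ℝ} (ht₀ : 0 ≤ t) (ht₁ : t < 1) (hx : 0 ≤ x) :
    (x ^ (1 - t) - 1) / (1 - t) ≤ ∑ n ∈ Icc 1 ⌊x⌋₊, (n : ℝ) ^ (-t) := by
  have : 0 < 1 - t := sub_pos.2 ht₁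
  refine le_trans ?_ (le_sum_Icc_rpow_neg ht₀ ht₁ _)
  gcongr
  exact (Nat.lt_floor_add_one x).le

theorem inv_mul_rpow_neg_le {c y t : ℝ} (hc : 1 ≤ c) (hy : 0 ≤ y) (ht : t ≤ 1) :
    c⁻¹ * y ^ (-t) ≤ (c * y) ^ (-t) := by
  rw [mul_rpow (by positivity) hy, ← rpow_neg_one]
  gcongr

theorem mul_rpow_neg_le {c y t : ℝ} (hc₀ : 0 < c) (hc₁ : c ≤ 1) (hy : 0 ≤ y) (ht : t ≤ 1) :
    (c * y) ^ (-t) ≤ c⁻¹ * y ^ (-t) := by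
  rw [mul_rpow hc₀.le hy, ← rpow_neg_one]
  exact mul_le_mul_of_nonneg_right
    (rpow_le_rpow_of_exponent_ge hc₀ hc₁ (neg_le_neg ht)) (by positivity)

theorem mul_rpow_neg_eq_div {a b t : ℝ} (ha : 0 ≤ a) (hb : 0 ≤ b) :
    (a * b) ^ (-t) = a ^ (-t) / b ^ t := by
  rw [mul_rpow ha hb, rpow_neg hb, div_eq_mul_inv]

theorem lt_nthPrime (n : ℕ) : n < nthPrime n := by
  have := Nat.add_two_le_nth_prime (n - 1)
  unfold nthPrime
  omega

theorem nthPrime_le_of_le_primeCounting {n k : ℕ} (hn : 1 ≤ n) (h : n ≤ Nat.primeCounting k) :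
    nthPrime n ≤ k := by
  have : n - 1 < Nat.count Nat.Prime (k + 1) := (Nat.sub_one_lt_of_lt hn).trans_le h
  exact Nat.lt_succ_iff.1 (Nat.nth_lt_of_lt_count this)

theorem factorial_le_primorial_nthPrime (n : ℕ) : n.factorial ≤ primorial (nthPrime n) := by
  rw [← prod_range_add_one_eq_factorial]
  calc ∏ i ∈ range n, (i + 1) ≤ ∏ i ∈ range n, Nat.nth Nat.Prime i :=
        prod_le_prod' fun i _ ↦ by linarith [Nat.add_two_le_nth_prime i]
    _ = ∏ p ∈ (range n).image (Nat.nth Nat.Prime), p :=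
        (prod_image (f := fun p ↦ p)
          (Nat.nth_injective Nat.infinite_setOfPred_prime).injOn).symm
    _ ≤ primorial (nthPrime n) := by
        refine prod_le_prod_of_subset_of_one_le' (image_subset_iff.2 fun i hi ↦ ?_) ?_
        · have : i ≤ n - 1 := Nat.le_sub_one_of_lt (mem_range.1 hi)
          exact Nat.mem_primesLE.2
            ⟨Nat.nth_monotone Nat.infinite_setOfPred_prime this, Nat.prime_nth_prime i⟩
        · exact fun p hp _ ↦ (Nat.prime_of_mem_primesLE hp).one_le

theorem mul_log_sub_one_le_log_factorial (n : ℕ) : n * (log n - 1) ≤ log n.factorial := by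
  rcases n.eq_zero_or_pos with rfl | hn
  · simp
  have hexp := pow_div_factorial_le_exp (n : ℝ) n.cast_nonneg n
  have hlog := log_le_log (by positivity) hexp
  rw [log_div (by positivity) (by positivity), log_pow, log_exp] at hlog
  linarith

theorem mul_log_sub_one_le_log_four_mul_nthPrime (n : ℕ) :
    n * (log n - 1) ≤ log 4 * nthPrime n :=
  calc n * (log n - 1) ≤ log n.factorial := mul_log_sub_one_le_log_factorial n
    _ ≤ log (primorial (nthPrime n)) :=
        log_le_log (by positivity) (by exact_mod_cast factorial_le_primorial_nthPrime n)
    _ = Chebyshev.theta (nthPrime n) := by rw [Chebyshev.theta_eq_log_primorial, Nat.floor_natCast]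
    _ ≤ log 4 * nthPrime n := Chebyshev.theta_le_log4_mul_x (Nat.cast_nonneg _)

theorem mul_le_nthPrime {n : ℕ} {L : ℝ} (hL : 16 ≤ L) (hnL : L / 2 ≤ log n) :
    5 / 16 * (n * L) ≤ (nthPrime n : ℝ) := by
  have hlog4 : log 4 ≤ 7 / 5 := by
    rw [show (4 : ℝ) = 2 ^ 2 by norm_num, log_pow]
    push_cast
    linarith [log_two_lt_d9]
  have : (n : ℝ) * (7 / 16 * L) ≤ 7 / 5 * nthPrime n :=
    calc (n : ℝ) * (7 / 16 * L) ≤ n * (log n - 1) := by gcongr; linarith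
      _ ≤ log 4 * nthPrime n := mul_log_sub_one_le_log_four_mul_nthPrime n
      _ ≤ 7 / 5 * nthPrime n := by gcongr
  linarith

theorem nthPrime_le_of_mul_log_le {n : ℕ} {y : ℝ} (hn : 1 ≤ n) (hy : 1 < y)
    (h : n * log y ≤ (y - 1) * log 2 - log (y + 2)) : (nthPrime n : ℝ) ≤ y := by
  have hcount : (n : ℝ) ≤ Nat.primeCounting ⌊y⌋₊ :=
    ((le_div_iff₀ (log_pos hy)).2 h).trans (Chebyshev.pi_ge' hy)
  have hfloor : nthPrime n ≤ ⌊y⌋₊ :=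
    nthPrime_le_of_le_primeCounting hn (by exact_mod_cast hcount)
  exact (Nat.cast_le.2 hfloor).trans (Nat.floor_le (by linarith))

theorem log_le_div_five {L : ℝ} (hL : 16 ≤ L) : log L ≤ L / 5 := by
  have tangent : log (L / 16) ≤ L / 16 - 1 := log_le_sub_one_of_pos (by linarith)
  have hlog16 : log 16 = 4 * log 2 := by
    rw [show (16 : ℝ) = 2 ^ 4 by norm_num, log_pow]
    norm_num
  rw [log_div (by linarith) (by norm_num), hlog16] at tangent
  linarith [log_two_lt_d9]

theorem nthPrime_le_mul {n : ℕ} {L : ℝ} (hn : 1 ≤ n) (hL : 16 ≤ L) (hnL : log n ≤ L) :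
    (nthPrime n : ℝ) ≤ 14 / 5 * (n * L) := by
  have hn₁ : (1 : ℝ) ≤ n := by exact_mod_cast hn
  have hn_le : 16 * (n : ℝ) ≤ n * L := by nlinarith
  have hL_le : L ≤ n * L := by nlinarith
  have hlog3 : log 3 ≤ 2 := by
    linarith [log_le_sub_one_of_pos (show (0 : ℝ) < 3 by norm_num)]
  have hlog_n : log n ≤ n := log_le_self n.cast_nonneg
  have hlog_L : log L ≤ L / 5 := log_le_div_five hL
  have hlog3nL : log (3 * (n * L)) = log 3 + (log n + log L) := by
    rw [log_mul (by norm_num) (by positivity), log_mul (by positivity) (by positivity)]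
  have hlog_le {z : ℝ} (hz₀ : 0 < z) (hz : z ≤ 3 * (n * L)) : log z ≤ 2 + log n + L / 5 := by
    linarith [log_le_log hz₀ hz]
  refine nthPrime_le_of_mul_log_le hn (by linarith) ?_
  calc n * log (14 / 5 * (n * L)) ≤ n * (2 + L + L / 5) := by
        gcongr
        linarith [hlog_le (z := 14 / 5 * (n * L)) (by positivity) (by linarith)]
    _ ≤ (14 / 5 * (n * L) - 1) * (69 / 100) - (2 + n + L / 5) := by linarith
    _ ≤ (14 / 5 * (n * L) - 1) * log 2 - log (14 / 5 * (n * L) + 2) := by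
        gcongr
        · linarith
        · linarith [log_two_gt_d9]
        · linarith [hlog_le (z := 14 / 5 * (n * L) + 2) (by positivity) (by linarith)]

theorem le_nthPrime_rpow_neg {n : ℕ} {L t : ℝ} (hn : 1 ≤ n) (hL : 16 ≤ L) (hnL : log n ≤ L)
    (ht₀ : 0 ≤ t) (ht₁ : t ≤ 1) :
    5 / 14 * ((n : ℝ) ^ (-t) / L ^ t) ≤ (nthPrime n : ℝ) ^ (-t) := by
  have hp : (0 : ℝ) < nthPrime n := by exact_mod_cast (Nat.zero_le n).trans_lt (lt_nthPrime n)
  calc 5 / 14 * ((n : ℝ) ^ (-t) / L ^ t) = (14 / 5)⁻¹ * (n * L) ^ (-t) := by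
        rw [mul_rpow_neg_eq_div n.cast_nonneg (by linarith), inv_div]
    _ ≤ (14 / 5 * (n * L)) ^ (-t) := inv_mul_rpow_neg_le (by norm_num) (by positivity) ht₁
    _ ≤ (nthPrime n : ℝ) ^ (-t) :=
        rpow_le_rpow_of_nonpos hp (nthPrime_le_mul hn hL hnL) (neg_nonpos.2 ht₀)

theorem nthPrime_rpow_neg_le {n : ℕ} {L t : ℝ} (hn : 1 ≤ n) (hL : 16 ≤ L) (hnL : L / 2 ≤ log n)
    (ht₀ : 0 ≤ t) (ht₁ : t ≤ 1) :
    (nthPrime n : ℝ) ^ (-t) ≤ 16 / 5 * ((n : ℝ) ^ (-t) / L ^ t) :=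
  calc (nthPrime n : ℝ) ^ (-t) ≤ (5 / 16 * (n * L)) ^ (-t) :=
        rpow_le_rpow_of_nonpos (by positivity) (mul_le_nthPrime hL hnL) (neg_nonpos.2 ht₀)
    _ ≤ (5 / 16)⁻¹ * (n * L) ^ (-t) :=
        mul_rpow_neg_le (by norm_num) (by norm_num) (by positivity) ht₁
    _ = 16 / 5 * ((n : ℝ) ^ (-t) / L ^ t) := by
        rw [mul_rpow_neg_eq_div n.cast_nonneg (by linarith), inv_div]

theorem le_sum_nthPrime_rpow_neg {t x : ℝ} (ht₀ : 0 ≤ t) (ht₁ : t < 1) (hx : exp 16 ≤ x) :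
    5 / 14 * ((x ^ (1 - t) - 1) / ((1 - t) * log x ^ t)) ≤
      ∑ n ∈ Icc 1 ⌊x⌋₊, (nthPrime n : ℝ) ^ (-t) := by
  have hx₀ : 0 < x := (exp_pos _).trans_le hx
  have hL : 16 ≤ log x := (le_log_iff_exp_le hx₀).2 hx
  calc 5 / 14 * ((x ^ (1 - t) - 1) / ((1 - t) * log x ^ t))
      ≤ 5 / 14 * ((∑ n ∈ Icc 1 ⌊x⌋₊, (n : ℝ) ^ (-t)) / log x ^ t) := by
        rw [← div_div]
        gcongr
        exact le_sum_Icc_floor_rpow_neg ht₀ ht₁ hx₀.le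
    _ = ∑ n ∈ Icc 1 ⌊x⌋₊, 5 / 14 * ((n : ℝ) ^ (-t) / log x ^ t) := by rw [sum_div, mul_sum]
    _ ≤ ∑ n ∈ Icc 1 ⌊x⌋₊, (nthPrime n : ℝ) ^ (-t) := by
        refine sum_le_sum fun n hn ↦ ?_
        obtain ⟨hn₁, hnx⟩ := mem_Icc.1 hn
        have hlog : log n ≤ log x :=
          log_le_log (by exact_mod_cast hn₁) ((Nat.le_floor_iff hx₀.le).1 hnx)
        exact le_nthPrime_rpow_neg hn₁ hL hlog ht₀ ht₁.le

theorem sum_nthPrime_rpow_neg_le_sum_rpow_neg {t : ℝ} (ht : 0 ≤ t) (N : ℕ) :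
    ∑ n ∈ Icc 1 N, (nthPrime n : ℝ) ^ (-t) ≤ ∑ n ∈ Icc 1 N, (n : ℝ) ^ (-t) := by
  refine sum_le_sum fun n hn ↦ rpow_le_rpow_of_nonpos ?_ ?_ (neg_nonpos.2 ht)
  · exact_mod_cast (mem_Icc.1 hn).1
  · exact_mod_cast (lt_nthPrime n).le

theorem sum_Ioc_floor_sqrt_nthPrime_rpow_neg_le {t x : ℝ} (ht₀ : 0 ≤ t) (ht₁ : t ≤ 1)
    (hx : exp 16 ≤ x) :
    ∑ n ∈ Ioc ⌊√x⌋₊ ⌊x⌋₊, (nthPrime n : ℝ) ^ (-t) ≤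
      16 / 5 * ((∑ n ∈ Icc 1 ⌊x⌋₊, (n : ℝ) ^ (-t)) / log x ^ t) := by
  have hx₀ : 0 < x := (exp_pos _).trans_le hx
  have hL : 16 ≤ log x := (le_log_iff_exp_le hx₀).2 hx
  have hsub : Ioc ⌊√x⌋₊ ⌊x⌋₊ ⊆ Icc 1 ⌊x⌋₊ := fun n hn ↦ by
    simp only [mem_Ioc, mem_Icc] at hn ⊢
    omega
  calc ∑ n ∈ Ioc ⌊√x⌋₊ ⌊x⌋₊, (nthPrime n : ℝ) ^ (-t)
      ≤ ∑ n ∈ Ioc ⌊√x⌋₊ ⌊x⌋₊, 16 / 5 * ((n : ℝ) ^ (-t) / log x ^ t) := by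
        refine sum_le_sum fun n hn ↦ ?_
        have hlog : log x / 2 ≤ log n := by
          rw [← log_sqrt hx₀.le]
          exact log_le_log (by positivity) (Nat.lt_of_floor_lt (mem_Ioc.1 hn).1).le
        exact nthPrime_rpow_neg_le (mem_Icc.1 (hsub hn)).1 hL hlog ht₀ ht₁
    _ ≤ ∑ n ∈ Icc 1 ⌊x⌋₊, 16 / 5 * ((n : ℝ) ^ (-t) / log x ^ t) :=
        sum_le_sum_of_subset_of_nonneg hsub fun n _ _ ↦ by positivity
    _ = 16 / 5 * ((∑ n ∈ Icc 1 ⌊x⌋₊, (n : ℝ) ^ (-t)) / log x ^ t) := by rw [sum_div, mul_sum]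

theorem sum_nthPrime_rpow_neg_le {t x : ℝ} (ht₀ : 0 ≤ t) (ht₁ : t < 1) (hx : exp 16 ≤ x) :
    ∑ n ∈ Icc 1 ⌊x⌋₊, (nthPrime n : ℝ) ^ (-t) ≤
      √x ^ (1 - t) / (1 - t) + 16 / 5 * (x ^ (1 - t) / ((1 - t) * log x ^ t)) := by
  have hx₁ : 1 ≤ x := (one_le_exp (by norm_num)).trans hx
  have hfloor : ⌊√x⌋₊ ≤ ⌊x⌋₊ := Nat.floor_le_floor (sqrt_le_self_iff.2 (.inr hx₁))
  have hsplit : Icc 1 ⌊x⌋₊ = Icc 1 ⌊√x⌋₊ ∪ Ioc ⌊√x⌋₊ ⌊x⌋₊ := by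
    ext n
    simp only [mem_union, mem_Icc, mem_Ioc]
    omega
  have hdisj : Disjoint (Icc 1 ⌊√x⌋₊) (Ioc ⌊√x⌋₊ ⌊x⌋₊) :=
    disjoint_left.2 fun n hn hn' ↦ (mem_Icc.1 hn).2.not_gt (mem_Ioc.1 hn').1
  rw [hsplit, sum_union hdisj]
  gcongr
  · exact (sum_nthPrime_rpow_neg_le_sum_rpow_neg ht₀ _).trans
      (sum_Icc_floor_rpow_neg_le ht₀ ht₁ (sqrt_nonneg x))
  · refine (sum_Ioc_floor_sqrt_nthPrime_rpow_neg_le ht₀ ht₁.le hx).trans ?_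
    rw [← div_div]
    have : 0 ≤ log x := log_nonneg hx₁
    gcongr
    exact sum_Icc_floor_rpow_neg_le ht₀ ht₁ (by linarith)

theorem log_lt_sqrt_rpow {p x : ℝ} (hp : 0 < p) (hx : exp 16 ≤ x) (hpx : 16 / p ^ 2 ≤ log x) :
    15 / 2 * log x < √x ^ p := by
  have hx₀ : 0 < x := (exp_pos _).trans_le hx
  have hL : 16 ≤ log x := (le_log_iff_exp_le hx₀).2 hx
  have hLp : 16 ≤ log x * p ^ 2 := (div_le_iff₀ (by positivity)).1 hpx
  set y := log √x * p with hy
  have hy_eq : y = log x / 2 * p := by rw [hy, log_sqrt hx₀.le]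
  have hy₀ : 0 ≤ y := by rw [hy_eq]; positivity
  have hy_sq : 4 * log x ≤ y ^ 2 := by
    calc 4 * log x = log x / 4 * 16 := by ring
      _ ≤ log x / 4 * (log x * p ^ 2) := by gcongr
      _ = y ^ 2 := by rw [hy_eq]; ring
  calc 15 / 2 * log x < (4 * log x) ^ 2 / 24 := by nlinarith
    _ ≤ (y ^ 2) ^ 2 / 24 := by gcongr
    _ = y ^ 4 / Nat.factorial 4 := by norm_num [Nat.factorial, ← pow_mul]
    _ ≤ exp y := pow_div_factorial_le_exp y hy₀ 4
    _ = √x ^ p := (rpow_def_of_pos (sqrt_pos.2 hx₀) p).symm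

theorem fifty_lt_rpow {p x : ℝ} (hp : 0 < p) (hx : exp 16 ≤ x) (hpx : 16 / p ^ 2 ≤ log x) :
    50 < x ^ p := by
  have hx₀ : 0 < x := (exp_pos _).trans_le hx
  have hL : 16 ≤ log x := (le_log_iff_exp_le hx₀).2 hx
  have hsqrt : √x ≤ x := sqrt_le_self_iff.2 (.inr ((one_le_exp (by norm_num)).trans hx))
  calc 50 < 15 / 2 * log x := by linarith
    _ < √x ^ p := log_lt_sqrt_rpow hp hx hpx
    _ ≤ x ^ p := by gcongr

theorem sqrt_rpow_div_lt {t x : ℝ} (ht : t < 1) (hx : exp 16 ≤ x)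
    (hpx : 16 / (1 - t) ^ 2 ≤ log x) :
    √x ^ (1 - t) / (1 - t) < 2 / 15 * (x ^ (1 - t) / ((1 - t) * log x ^ t)) := by
  have h1t : 0 < 1 - t := sub_pos.2 ht
  have hx₀ : 0 < x := (exp_pos _).trans_le hx
  have hL : 16 ≤ log x := (le_log_iff_exp_le hx₀).2 hx
  have hLt : log x ^ t < 2 / 15 * √x ^ (1 - t) := by
    linarith [rpow_le_self_of_one_le (x := log x) (by linarith) ht.le, log_lt_sqrt_rpow h1t hx hpx]
  have hsq : √x ^ (1 - t) * √x ^ (1 - t) = x ^ (1 - t) := by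
    rw [← mul_rpow (by positivity) (by positivity), mul_self_sqrt hx₀.le]
  calc √x ^ (1 - t) / (1 - t) = √x ^ (1 - t) * log x ^ t / ((1 - t) * log x ^ t) := by
        field_simp
    _ < √x ^ (1 - t) * (2 / 15 * √x ^ (1 - t)) / ((1 - t) * log x ^ t) := by gcongr
    _ = 2 / 15 * (x ^ (1 - t) / ((1 - t) * log x ^ t)) := by rw [← hsq]; ring

theorem sum_reciprocal_prime_powers_bounds_general
    (t x : ℝ) (ht₀ : 0 ≤ t) (ht₁ : t < 1) (hx : exp (16 / (1 - t) ^ 2) ≤ x) :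
    7 / 20 * (x ^ (1 - t) / ((1 - t) * log x ^ t)) <
        (∑ n ∈ Icc 1 ⌊x⌋₊, (nthPrime n : ℝ) ^ (-t)) ∧
      (∑ n ∈ Icc 1 ⌊x⌋₊, (nthPrime n : ℝ) ^ (-t)) <
        10 / 3 * (x ^ (1 - t) / ((1 - t) * log x ^ t)) := by
  have h1t : 0 < 1 - t := sub_pos.2 ht₁
  have hx₀ : 0 < x := (exp_pos _).trans_le hx
  have hpx : 16 / (1 - t) ^ 2 ≤ log x := (le_log_iff_exp_le hx₀).2 hx
  have hL : 16 ≤ log x :=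
    (le_div_self (by norm_num) (by positivity) (pow_le_one₀ h1t.le (by linarith))).trans hpx
  have hx₁₆ : exp 16 ≤ x := (le_log_iff_exp_le hx₀).1 hL
  constructor
  · calc 7 / 20 * (x ^ (1 - t) / ((1 - t) * log x ^ t))
        = 7 / 20 * x ^ (1 - t) / ((1 - t) * log x ^ t) := (mul_div_assoc ..).symm
      _ < 5 / 14 * (x ^ (1 - t) - 1) / ((1 - t) * log x ^ t) :=
        div_lt_div_of_pos_right (by linarith [fifty_lt_rpow h1t hx₁₆ hpx]) (by positivity)
      _ = 5 / 14 * ((x ^ (1 - t) - 1) / ((1 - t) * log x ^ t)) := mul_div_assoc ..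
      _ ≤ _ := le_sum_nthPrime_rpow_neg ht₀ ht₁ hx₁₆
  · linarith [sum_nthPrime_rpow_neg_le ht₀ ht₁ hx₁₆, sqrt_rpow_div_lt ht₁ hx₁₆ hpx]

end

theorem sum_reciprocal_prime_powers_bounds
    (t x : ℝ) (ht₁ : 1 / 2 < t) (ht₂ : t < 1)
    (hx : Real.exp (16 / (1 - t) ^ 2) ≤ x) :
    7 / 20 * (x ^ (1 - t) / ((1 - t) * Real.log x ^ t)) <
        (∑ n ∈ Finset.Icc 1 ⌊x⌋₊, (nthPrime n : ℝ) ^ (-t)) ∧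
      (∑ n ∈ Finset.Icc 1 ⌊x⌋₊, (nthPrime n : ℝ) ^ (-t)) <
        10 / 3 * (x ^ (1 - t) / ((1 - t) * Real.log x ^ t)) :=
  sum_reciprocal_prime_powers_bounds_general t x (by linarith) ht₂ hx
end

section
/- There exists a smooth (C^∞) increasing function f : ℝ_{≥1} → ℝ_{≥1} and a positive constant C_P < 7 such that: (1) f(n) = p_n for every positive integer n; (2) for every positive integer n and every x ∈ [n, n+1], f'(x) ≤ C_P·(p_{n+1} − p_n). -/
/-!
Between consecutive integers the interpolating function is a translated and rescaled copy of the
standard smooth step `Real.smoothTransition`, which is constant outside `(0, 1)`, so that the pieces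
fit together smoothly. On `(0, 1)` the step at `t` is the sigmoid of `u = (1 - t)⁻¹ - t⁻¹`, so its
derivative is `(t⁻² + (1 - t)⁻²) / (2 + 2 cosh u)`, and `cosh u ≥ 1 + u² / 2` bounds this by `2`,
the value at `t = 1 / 2`.
-/

open Filter Real Set

theorem strictMonoOn_Ici_of_strictMonoOn_Icc {R β : Type*} [Semiring R] [LinearOrder R]
    [IsStrictOrderedRing R] [Archimedean R] [Preorder β] {f : R → β} {m : ℕ}
    (hf : ∀ n : ℕ, m ≤ n → StrictMonoOn f (Icc (n : R) (n + 1))) :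
    StrictMonoOn f (Ici (m : R)) := by
  have hIcc (n : ℕ) (hn : m ≤ n) : StrictMonoOn f (Icc (m : R) n) := by
    induction n, hn using Nat.le_induction with
    | base => simp
    | succ n hn ih =>
      have hmn : (m : R) ≤ n := Nat.cast_le.2 hn
      have hn_succ : (n : R) ≤ n + 1 := by simp
      rw [Nat.cast_succ, ← Icc_union_Icc_eq_Icc hmn hn_succ]
      exact ih.union (hf n hn) (isGreatest_Icc hmn) (isLeast_Icc hn_succ)
  intro x hx y hy hxy
  obtain ⟨n, hyn⟩ := exists_nat_ge y
  have hmn : m ≤ n := Nat.cast_le.1 (le_trans hy hyn)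
  exact hIcc n hmn ⟨hx, hxy.le.trans hyn⟩ ⟨hy, hyn⟩ hxy

theorem one_add_sq_div_two_le_cosh (u : ℝ) : 1 + u ^ 2 / 2 ≤ cosh u := by
  have hsinh : (u / 2) ^ 2 ≤ sinh (u / 2) ^ 2 := by
    rw [sq_le_sq, abs_sinh, self_le_sinh_iff]
    exact abs_nonneg _
  calc 1 + u ^ 2 / 2 = 1 + 2 * (u / 2) ^ 2 := by ring
    _ ≤ 1 + 2 * sinh (u / 2) ^ 2 := by gcongr
    _ = cosh (2 * (u / 2)) := by rw [cosh_two_mul, cosh_sq]; ring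
    _ = cosh u := by rw [mul_div_cancel₀ u two_ne_zero]

theorem sigmoid_mul_one_sub_sigmoid (u : ℝ) :
    sigmoid u * (1 - sigmoid u) = (2 + 2 * cosh u)⁻¹ := by
  rw [← sigmoid_neg, sigmoid_def, sigmoid_def, neg_neg, ← mul_inv, cosh_eq]
  have hexp : exp (-u) * exp u = 1 := by rw [← exp_add, neg_add_cancel, exp_zero]
  congr 1
  linear_combination hexp

section SmoothTransition

variable {t : ℝ}

theorem smoothTransition_eq_sigmoid (ht : t ∈ Ioo 0 1) :
    smoothTransition t = sigmoid ((1 - t)⁻¹ - t⁻¹) := by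
  have hexp : exp (-((1 - t)⁻¹ - t⁻¹)) = exp (-(1 - t)⁻¹) / exp (-t⁻¹) := by
    rw [← exp_sub]
    ring_nf
  rw [sigmoid_def, hexp, smoothTransition, expNegInvGlue, expNegInvGlue, if_neg ht.1.not_ge,
    if_neg (sub_pos.2 ht.2).not_ge]
  field_simp

theorem hasDerivAt_smoothTransition (ht : t ∈ Ioo 0 1) :
    HasDerivAt smoothTransition
      ((t⁻¹ ^ 2 + (1 - t)⁻¹ ^ 2) / (2 + 2 * cosh ((1 - t)⁻¹ - t⁻¹))) t := by
  have heq : smoothTransition =ᶠ[nhds t] fun s ↦ sigmoid ((1 - s)⁻¹ - s⁻¹) := by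
    filter_upwards [Ioo_mem_nhds ht.1 ht.2] with s hs using smoothTransition_eq_sigmoid hs
  have harg : HasDerivAt (fun s : ℝ ↦ (1 - s)⁻¹ - s⁻¹) (t⁻¹ ^ 2 + (1 - t)⁻¹ ^ 2) t := by
    refine ((((hasDerivAt_id' t).const_sub 1).fun_inv (sub_pos.2 ht.2).ne').fun_sub
      (hasDerivAt_inv ht.1.ne')).congr_deriv ?_
    rw [inv_pow, inv_pow]
    ring
  rw [div_eq_mul_inv, mul_comm, ← sigmoid_mul_one_sub_sigmoid]
  exact ((hasDerivAt_sigmoid _).comp t harg).congr_of_eventuallyEq heq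

theorem deriv_smoothTransition_of_notMem_Ioo (ht : t ∉ Ioo 0 1) :
    deriv smoothTransition t = 0 := by
  rcases le_or_gt t 0 with ht0 | ht0
  · refine IsLocalMin.deriv_eq_zero (Eventually.of_forall fun s ↦ ?_)
    exact (smoothTransition.zero_of_nonpos ht0).trans_le (smoothTransition.nonneg s)
  · have ht1 : 1 ≤ t := not_lt.1 fun ht1 ↦ ht ⟨ht0, ht1⟩
    refine IsLocalMax.deriv_eq_zero (Eventually.of_forall fun s ↦ ?_)
    exact (smoothTransition.le_one s).trans_eq (smoothTransition.one_of_one_le ht1).symm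

theorem inv_sq_add_inv_one_sub_sq_le (ht : t ∈ Ioo 0 1) :
    t⁻¹ ^ 2 + (1 - t)⁻¹ ^ 2 ≤ 8 + 2 * ((1 - t)⁻¹ - t⁻¹) ^ 2 := by
  set a := t⁻¹ with ha
  set b := (1 - t)⁻¹ with hb
  have hab : a + b = a * b := by
    have ht0 := ht.1.ne'
    have ht1 := (sub_pos.2 ht.2).ne'
    rw [ha, hb]
    field_simp
    ring
  have hpos : 0 < a * b := mul_pos (inv_pos.2 ht.1) (inv_pos.2 (sub_pos.2 ht.2))
  have hfour : 4 ≤ a * b := by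
    refine le_of_mul_le_mul_right ?_ hpos
    calc 4 * (a * b) = 4 * a * b := by ring
      _ ≤ (a + b) ^ 2 := four_mul_le_pow_two_add a b
      _ = a * b * (a * b) := by rw [hab, sq]
  have hfactor : 8 + 2 * (b - a) ^ 2 - (a ^ 2 + b ^ 2) = (a * b - 2) * (a * b - 4) := by
    linear_combination (a + b + a * b) * hab
  rw [← sub_nonneg, hfactor]
  exact mul_nonneg (by linarith) (by linarith)

theorem deriv_smoothTransition_le_two (t : ℝ) : deriv smoothTransition t ≤ 2 := by
  by_cases ht : t ∈ Ioo 0 1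
  · rw [(hasDerivAt_smoothTransition ht).deriv, div_le_iff₀ (by positivity)]
    calc t⁻¹ ^ 2 + (1 - t)⁻¹ ^ 2 ≤ 8 + 2 * ((1 - t)⁻¹ - t⁻¹) ^ 2 :=
          inv_sq_add_inv_one_sub_sq_le ht
      _ ≤ 2 * (2 + 2 * cosh ((1 - t)⁻¹ - t⁻¹)) := by
          linarith [one_add_sq_div_two_le_cosh ((1 - t)⁻¹ - t⁻¹)]
  · rw [deriv_smoothTransition_of_notMem_Ioo ht]
    exact zero_le_two

theorem strictMonoOn_smoothTransition : StrictMonoOn smoothTransition (Icc 0 1) := by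
  refine strictMonoOn_of_deriv_pos (convex_Icc 0 1) smoothTransition.continuous.continuousOn
    fun t ht ↦ ?_
  rw [interior_Icc] at ht
  have ht0 := ht.1
  rw [(hasDerivAt_smoothTransition ht).deriv]
  positivity

end SmoothTransition

/-- The function interpolating `a` at the natural numbers which on each `[n, n + 1]` is a rescaled
copy of `Real.smoothTransition`. It is encoded as a sum of smooth steps, one for each increment of
`a`; the terms with `x ≤ k` vanish, so the sum can be cut off at any bound for `x`. -/
noncomputable def smoothInterp (a : ℕ → ℝ) (x : ℝ) : ℝ :=
  a 0 + ∑ k ∈ Finset.range ⌈x⌉₊, (a (k + 1) - a k) * smoothTransition (x - k)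

namespace smoothInterp

variable {a : ℕ → ℝ} {m n N : ℕ} {x : ℝ}

theorem eq_sum_range (hx : x ≤ N) :
    smoothInterp a x =
      a 0 + ∑ k ∈ Finset.range N, (a (k + 1) - a k) * smoothTransition (x - k) := by
  rw [smoothInterp]
  congr 1
  refine Finset.sum_subset (Finset.range_subset_range.2 (Nat.ceil_le.2 hx)) fun k _ hk ↦ ?_
  rw [Finset.mem_range, not_lt, Nat.ceil_le] at hk
  rw [smoothTransition.zero_of_nonpos (sub_nonpos.2 hk), mul_zero]

protected theorem contDiff {r : ℕ∞} : ContDiff ℝ r (smoothInterp a) := by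
  rw [contDiff_iff_contDiffAt]
  intro x
  obtain ⟨N, hN⟩ := exists_nat_gt x
  have heq : smoothInterp a =ᶠ[nhds x] fun y ↦
      a 0 + ∑ k ∈ Finset.range N, (a (k + 1) - a k) * smoothTransition (y - k) := by
    filter_upwards [Iio_mem_nhds hN] with y hy using eq_sum_range (le_of_lt hy)
  exact ContDiffAt.congr_of_eventuallyEq (by fun_prop) heq

protected theorem differentiable : Differentiable ℝ (smoothInterp a) :=
  (smoothInterp.contDiff (r := 1)).differentiable (by simp)

theorem eq_of_mem_Icc (hx : x ∈ Icc (n : ℝ) (n + 1)) :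
    smoothInterp a x = a n + (a (n + 1) - a n) * smoothTransition (x - n) := by
  have hsum : ∑ k ∈ Finset.range n, (a (k + 1) - a k) * smoothTransition (x - k) = a n - a 0 := by
    rw [← Finset.sum_range_sub]
    refine Finset.sum_congr rfl fun k hk ↦ ?_
    have hkn : (k : ℝ) + 1 ≤ n := mod_cast Finset.mem_range.1 hk
    rw [smoothTransition.one_of_one_le (by linarith [hx.1]), mul_one]
  rw [eq_sum_range (N := n + 1) (mod_cast hx.2), Finset.sum_range_succ, hsum]
  ring

theorem apply_natCast (a : ℕ → ℝ) (n : ℕ) : smoothInterp a n = a n := by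
  rw [eq_of_mem_Icc (left_mem_Icc.2 (by simp)), sub_self, smoothTransition.zero, mul_zero, add_zero]

theorem deriv_of_mem_Icc (hx : x ∈ Icc (n : ℝ) (n + 1)) :
    deriv (smoothInterp a) x = (a (n + 1) - a n) * deriv smoothTransition (x - n) := by
  have hunique : UniqueDiffWithinAt ℝ (Icc (n : ℝ) (n + 1)) x :=
    uniqueDiffOn_Icc (lt_add_one _) x hx
  have hstep : DifferentiableAt ℝ smoothTransition (x - n) :=
    (smoothTransition.contDiff (n := 1)).differentiable (by simp) _
  have hpiece : HasDerivAt (fun y ↦ a n + (a (n + 1) - a n) * smoothTransition (y - n))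
      ((a (n + 1) - a n) * deriv smoothTransition (x - n)) x :=
    ((hstep.hasDerivAt.comp_sub_const x n).const_mul _).const_add _
  rw [← (smoothInterp.differentiable x).derivWithin hunique,
    ← hpiece.hasDerivWithinAt.derivWithin hunique]
  exact derivWithin_congr (fun y hy ↦ eq_of_mem_Icc hy) (eq_of_mem_Icc hx)

theorem deriv_le (ha : a n ≤ a (n + 1)) (hx : x ∈ Icc (n : ℝ) (n + 1)) :
    deriv (smoothInterp a) x ≤ 2 * (a (n + 1) - a n) := by
  rw [deriv_of_mem_Icc hx, mul_comm]
  exact mul_le_mul_of_nonneg_right (deriv_smoothTransition_le_two _) (sub_nonneg.2 ha)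

theorem strictMonoOn_Icc (ha : a n < a (n + 1)) :
    StrictMonoOn (smoothInterp a) (Icc (n : ℝ) (n + 1)) := by
  intro x hx y hy hxy
  have hstep : smoothTransition (x - n) < smoothTransition (y - n) :=
    strictMonoOn_smoothTransition ⟨sub_nonneg.2 hx.1, sub_le_iff_le_add'.2 hx.2⟩
      ⟨sub_nonneg.2 hy.1, sub_le_iff_le_add'.2 hy.2⟩ (sub_lt_sub_right hxy _)
  rw [eq_of_mem_Icc hx, eq_of_mem_Icc hy]
  gcongr

theorem strictMonoOn_Ici (ha : StrictMonoOn a (Ici m)) :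
    StrictMonoOn (smoothInterp a) (Ici (m : ℝ)) :=
  strictMonoOn_Ici_of_strictMonoOn_Icc fun n hn ↦
    strictMonoOn_Icc (ha hn (hn.trans n.le_succ) n.lt_succ_self)

end smoothInterp

theorem exists_smooth_interpolation_of_primes_general {a : ℕ → ℝ} (ha : StrictMonoOn a (Ici 1)) :
    ∃ f : ℝ → ℝ,
      ContDiffOn ℝ (⊤ : ℕ∞) f (Ici 1) ∧
      StrictMonoOn f (Ici 1) ∧
      (∀ x : ℝ, 1 ≤ x → a 1 ≤ f x) ∧
      (∀ n : ℕ, 1 ≤ n → f n = a n) ∧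
      (∀ n : ℕ, 1 ≤ n → ∀ x ∈ Icc (n : ℝ) (n + 1),
        derivWithin f (Ici 1) x ≤ 2 * (a (n + 1) - a n)) := by
  have hmono : StrictMonoOn (smoothInterp a) (Ici 1) :=
    mod_cast smoothInterp.strictMonoOn_Ici ha
  refine ⟨smoothInterp a, smoothInterp.contDiff.contDiffOn, hmono, fun x hx ↦ ?_,
    fun n _ ↦ smoothInterp.apply_natCast a n, fun n hn x hx ↦ ?_⟩
  · rw [← smoothInterp.apply_natCast a 1, Nat.cast_one]
    exact hmono.monotoneOn self_mem_Ici hx hx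
  · have hx1 : 1 ≤ x := le_trans (mod_cast hn) hx.1
    rw [(smoothInterp.differentiable x).derivWithin (uniqueDiffOn_Ici 1 x hx1)]
    exact smoothInterp.deriv_le (ha hn (hn.trans n.le_succ) n.lt_succ_self).le hx

theorem strictMonoOn_nthPrime : StrictMonoOn nthPrime (Ici 1) := fun _ hm _ _ hmn ↦
  Nat.nth_strictMono Nat.infinite_setOfPred_prime (Nat.sub_lt_sub_right hm hmn)

theorem one_le_nthPrime (n : ℕ) : 1 ≤ nthPrime n :=
  (Nat.prime_nth_prime _).one_le

theorem exists_smooth_interpolation_of_primes :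
    ∃ (f : ℝ → ℝ) (C_P : ℝ),
      0 < C_P ∧ C_P < 7 ∧
      ContDiffOn ℝ (⊤ : ℕ∞) f (Set.Ici 1) ∧
      StrictMonoOn f (Set.Ici 1) ∧
      (∀ x : ℝ, 1 ≤ x → 1 ≤ f x) ∧
      (∀ n : ℕ, 1 ≤ n → f (n : ℝ) = (nthPrime n : ℝ)) ∧
      (∀ n : ℕ, 1 ≤ n → ∀ x ∈ Set.Icc (n : ℝ) ((n : ℝ) + 1),
        derivWithin f (Set.Ici 1) x ≤ C_P * ((nthPrime (n + 1) : ℝ) - (nthPrime n : ℝ))) := by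
  obtain ⟨f, hsmooth, hmono, hge, hval, hderiv⟩ := exists_smooth_interpolation_of_primes_general
    (a := fun n ↦ nthPrime n) (Nat.strictMono_cast.comp_strictMonoOn strictMonoOn_nthPrime)
  exact ⟨f, 2, two_pos, by norm_num, hsmooth, hmono,
    fun x hx ↦ le_trans (mod_cast one_le_nthPrime 1) (hge x hx), hval, hderiv⟩
end
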